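/- Let q ≥ 2, n ≥ 2, gcd(d,q) = 1, and let o_n = (O,0^n) = (x_0,x_1,…,x_{L−1}) be the generalized prefer-opposite sequence. Let β = d^{−1}(q−1) (mod q), where d^{−1} is the inverse of d modulo q, and let (x̂_0,…,x̂_{L−2}) = D_β(o_n) be the termwise image x̂_i = β(x_{i+1} − x_i) (mod q). Form the subsequence of (x̂_0,…,x̂_{L−2}) obtained by deleting every digit x̂_i such that the (n−1)-word (x̂_{i−n+2},…,x̂_i) already occurs as a contiguous subword of (x̂_0,…,x̂_{i−1}). Then the resulting subsequence is exactly the prefer-higher de Bruijn sequence h_{n−1} of order n−1. -/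

import Mathlib

/-!
Write `n = k + 2`. Windows of length `n` are edges of the de Bruijn graph on `(n-1)`-words, and a
greedy sequence is a trail in it. `D_β` sends this graph onto the de Bruijn graph on
`(n-2)`-words as a `q`-fold covering. Since `β d = -1`, the `j`-th choice `a + j d` has image
`-j = q - j`, so the rule for `o_n` is the prefer-higher rule lifted to the cover (`OprefL_eq`).

The heart is `main_invariant`: at each stage `x` of the construction of `o_n`, the cleaned image `g`
is a stage of the construction of `h_{n-1}` and has the same `(n-1)`-windows as the image. Suppose
the next step creates a new image window `w b`. All digits above `b` have been used at the current
vertex of the cover. If `w` were not the current vertex of `g`, then by the balance of in- and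
out-degrees (`Reach.balance`) and since digits leave `w` from the top down (`H_preferred`), `g`
would have at most as many edges into `w` as there are digits above `b`; but the balance for `x`
at the current lift of `w` gives strictly more entries than that, and each edge into `w` has only
one lift into a given lift of `w`. So `w` is the current vertex of `g`, and `b` is the highest
unused digit there, that is, the next digit of `h_{n-1}`.

When `o_n` halts, every edge leaving a vertex that ends in `0` has been used (`out_full`). Every
`(n-2)`-word has such a lift, so all `(n-1)`-words occur in the image, hence in `g`, and the
construction of `h_{n-1}` halts at `g` as well.
-/

namespace PaperDB

/-- The last `s` entries of `l`. -/
def lastN {α : Type*} (s : ℕ) (l : List α) : List α := l.drop (l.length - s)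

/-- The digit appended by the greedy rule, if any: the most preferred digit `c`
(according to the preference function `P`, evaluated at the last `s` digits,
`P x 0` being the most preferred digit) such that the `n`-window created by
appending `c` has not yet occurred as a contiguous subword. -/
def nextDigit (q s n : ℕ) (P : List (ZMod q) → Fin q → ZMod q)
    (l : List (ZMod q)) : Option (ZMod q) :=
  ((List.finRange q).map (fun i => P (lastN s l) i)).find?
    (fun c => !decide ((lastN (n - 1) l ++ [c]) <:+: l))

/-- Fuel-bounded greedy extension. -/
def greedyAux (q s n : ℕ) (P : List (ZMod q) → Fin q → ZMod q) :
    ℕ → List (ZMod q) → List (ZMod q)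
  | 0, l => l
  | f + 1, l =>
    match nextDigit q s n P l with
    | none => l
    | some c => greedyAux q s n P f (l ++ [c])

/-- The greedy sequence `(P, I)`: fuel `q ^ n` provably suffices for the
construction to halt, since every `n`-word occurs at most once. -/
def greedy (q s n : ℕ) (P : List (ZMod q) → Fin q → ZMod q)
    (I : List (ZMod q)) : List (ZMod q) :=
  greedyAux q s n P (q ^ n) I

/-- The number of occurrences of `w` as a length-`n` contiguous window of `l`. -/
def windowCount (q n : ℕ) (w l : List (ZMod q)) : ℕ :=
  ((List.range (l.length + 1 - n)).filter
    (fun i => decide ((l.drop i).take n = w))).length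

/-- `P` is a preference function (of span `s`): it assigns to every `s`-word a
permutation of the alphabet `ZMod q`. -/
def IsPrefFun (q s : ℕ) (P : List (ZMod q) → Fin q → ZMod q) : Prop :=
  ∀ x : List (ZMod q), x.length = s → Function.Bijective (P x)

/-- The generalized prefer-opposite preference function `O^{(q,d)}`, of span 1:
`O_j(a) = a + j·d (mod q)` for `j = 1,…,q`; the `Fin q`-index `j` denotes column `j+1`. -/
def OprefL (q d : ℕ) : List (ZMod q) → Fin q → ZMod q :=
  fun x j => x.headI + (((j : ℕ) + 1 : ℕ) : ZMod q) * (d : ZMod q)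

/-- The generalized prefer-opposite sequence `o_n = (O, 0^n)`. -/
def oSeq (q n d : ℕ) : List (ZMod q) :=
  greedy q 1 n (OprefL q d) (List.replicate n 0)

/-- The generalized Lempel homomorphism `D_β`: it sends `(x_0,…,x_{L-1})` to
`(β(x_1-x_0), …, β(x_{L-1}-x_{L-2}))`, arithmetic modulo `q`. -/
def Dmap (q : ℕ) (β : ZMod q) (l : List (ZMod q)) : List (ZMod q) :=
  List.zipWith (fun x y => β * (y - x)) l l.tail

/-- Delete from `l` every digit (at position `i`) whose length-`m` window
`(l_{i-m+1},…,l_i)` ending at it already occurs as a contiguous subword of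
`(l_0,…,l_{i-1})`, keeping all other digits. -/
def cleaned (q m : ℕ) (l : List (ZMod q)) : List (ZMod q) :=
  ((List.range l.length).filter fun i =>
      !decide (((l.take (i + 1)).drop (i + 1 - m)) <:+: l.take i)).map
    fun i => l.getD i 0

/-- The prefer-higher preference function: `H_j(a) = q - j` for `j = 1,…,q`,
i.e. the preference order is `q-1, q-2, …, 1, 0` regardless of the last
digit; the `Fin q`-index `j` denotes column `j+1`. -/
def Hpref (q : ℕ) : List (ZMod q) → Fin q → ZMod q :=
  fun _ j => ((q - 1 - (j : ℕ) : ℕ) : ZMod q)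

/-- The prefer-higher (nonbinary Ford) de Bruijn sequence `h_m` of order `m`. -/
def hSeq (q m : ℕ) : List (ZMod q) :=
  greedy q 1 m (Hpref q) (List.replicate m 0)


/-! ### Windows of lists -/

theorem lastN_length {α : Type*} {s : ℕ} {l : List α} (h : s ≤ l.length) :
    (lastN s l).length = s := by
  simp [lastN]; omega

theorem lastN_suffix {α : Type*} (s : ℕ) (l : List α) : lastN s l <:+ l :=
  List.drop_suffix _ _

theorem eq_lastN_of_suffix {α : Type*} {w l : List α} (h : w <:+ l) :
    w = lastN w.length l := by
  obtain ⟨t, rfl⟩ := h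
  simp [lastN]

theorem lastN_snoc {α : Type*} {s : ℕ} {l : List α} (c : α) :
    lastN (s + 1) (l ++ [c]) = lastN s l ++ [c] := by
  unfold lastN
  rw [List.drop_append_of_le_length (by simp)]
  congr 2
  simp

theorem infix_snoc {α : Type*} {w l : List α} {k : ℕ} {c : α} (hw : w.length = k + 1) :
    w <:+: l ++ [c] ↔ w <:+: l ∨ w = lastN k l ++ [c] := by
  rw [← lastN_snoc, List.infix_concat_iff, or_comm]
  refine or_congr_right' fun h => ⟨fun h => hw ▸ eq_lastN_of_suffix h, fun h => h ▸ lastN_suffix _ _⟩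

/-! ### Stages of a greedy sequence -/

/-- The lists produced by finitely many greedy steps from `0 ^ n`, with a span-one preference. -/
inductive Reach (q n : ℕ) (P : List (ZMod q) → Fin q → ZMod q) : List (ZMod q) → Prop
  | base : Reach q n P (List.replicate n 0)
  | step {l : List (ZMod q)} {c : ZMod q} :
      Reach q n P l → nextDigit q 1 n P l = some c → Reach q n P (l ++ [c])

theorem nextDigit_eq_some {q k : ℕ} {P : List (ZMod q) → Fin q → ZMod q}
    {l : List (ZMod q)} {c : ZMod q} :
    nextDigit q 1 (k + 1) P l = some c ↔ ∃ i : Fin q, P (lastN 1 l) i = c ∧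
      ¬ (lastN k l ++ [c]) <:+: l ∧ ∀ j < i, (lastN k l ++ [P (lastN 1 l) j]) <:+: l := by
  unfold nextDigit
  rw [List.find?_eq_some_iff_getElem]
  constructor
  · rintro ⟨h1, i, hi, h2, h3⟩
    have hi' : i < q := by simpa using hi
    refine ⟨⟨i, hi'⟩, by simpa using h2, by simpa using h1, fun j hj => ?_⟩
    simpa using h3 j hj
  · rintro ⟨i, h1, h2, h3⟩
    refine ⟨by simpa using h2, i, by simp, by simpa using h1, fun j hj => ?_⟩
    simpa using h3 ⟨j, hj.trans i.2⟩ hj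

theorem nextDigit_eq_none {q k : ℕ} {P : List (ZMod q) → Fin q → ZMod q}
    {l : List (ZMod q)} :
    nextDigit q 1 (k + 1) P l = none ↔
      ∀ i : Fin q, (lastN k l ++ [P (lastN 1 l) i]) <:+: l := by
  simp [nextDigit]

namespace Reach

variable {q k : ℕ} {P : List (ZMod q) → Fin q → ZMod q} {l : List (ZMod q)}

theorem le_length {n : ℕ} (h : Reach q n P l) : n ≤ l.length := by
  induction h with
  | base => simp
  | step _ _ ih => simp; omega

theorem zero_infix {n : ℕ} (h : Reach q n P l) : List.replicate n 0 <:+: l := by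
  induction h with
  | base => exact List.infix_rfl
  | step _ _ ih => exact ih.trans (List.prefix_append _ _).isInfix

/-- Each greedy step creates a new window, so there are at most `q ^ (k + 1) - 1` of them. -/
theorem length_lt [NeZero q] (h : Reach q (k + 1) P l) :
    l.length < k + 1 + q ^ (k + 1) := by
  have key : (Finset.univ.filter fun w : Fin (k + 1) → ZMod q =>
      List.ofFn w <:+: l).card + k = l.length := by
    induction h with
    | base =>
      have : (Finset.univ.filter fun w : Fin (k + 1) → ZMod q =>
          List.ofFn w <:+: List.replicate (k + 1) 0) = {fun _ => 0} := by
        ext w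
        simp only [Finset.mem_filter, Finset.mem_univ, true_and, Finset.mem_singleton]
        rw [← List.ofFn_inj, List.ofFn_const]
        constructor
        · intro h
          exact h.eq_of_length (by simp)
        · intro h
          rw [h]
      rw [this]; simp; omega
    | @step l c hl hc ih =>
      obtain ⟨i, -, hn, -⟩ := nextDigit_eq_some.1 hc
      have hk := hl.le_length
      have hlen : (lastN k l ++ [c]).length = k + 1 := by
        simp [lastN_length (show k ≤ l.length by omega)]
      obtain ⟨w0, hw0⟩ : ∃ w0 : Fin (k + 1) → ZMod q, List.ofFn w0 = lastN k l ++ [c] :=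
        ⟨fun i => (lastN k l ++ [c])[i]'(by omega), 
          List.ext_getElem (by simp [-List.ofFn_succ, hlen]) (by simp [-List.ofFn_succ])⟩
      have : (Finset.univ.filter fun w : Fin (k + 1) → ZMod q => List.ofFn w <:+: l ++ [c]) =
          insert w0 (Finset.univ.filter fun w : Fin (k + 1) → ZMod q => List.ofFn w <:+: l) := by
        ext w
        simp only [Finset.mem_filter, Finset.mem_univ, true_and, Finset.mem_insert]
        rw [infix_snoc (List.length_ofFn), ← hw0, List.ofFn_inj, or_comm]
      rw [this, Finset.card_insert_of_notMem (by simpa [-List.ofFn_succ, hw0] using hn),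
        List.length_append, List.length_singleton]
      omega
  have := Finset.card_filter_le (Finset.univ : Finset (Fin (k + 1) → ZMod q))
    (fun w => List.ofFn w <:+: l)
  simp only [Finset.card_univ, Fintype.card_fun, ZMod.card, Fintype.card_fin] at this
  omega

/-- Running the greedy rule from `0 ^ n` passes through every list satisfying `Reach`. -/
theorem greedyAux_eq {n : ℕ} (h : Reach q n P l) (f : ℕ) :
    greedyAux q 1 n P (l.length - n + f) (List.replicate n 0) = greedyAux q 1 n P f l := by
  induction h generalizing f with
  | base => simp
  | @step l c hl hc ih =>
    have := hl.le_length
    rw [show (l ++ [c]).length - n + f = l.length - n + (f + 1) by simp; omega, ih]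
    simp [greedyAux, hc]

/-- A run either halts within its fuel or uses all of it. -/
theorem run {n : ℕ} (h : Reach q n P l) (f : ℕ) :
    Reach q n P (greedyAux q 1 n P f l) ∧
      (nextDigit q 1 n P (PaperDB.greedyAux q 1 n P f l) = none ∨
        (PaperDB.greedyAux q 1 n P f l).length = l.length + f) := by
  induction f generalizing l with
  | zero => exact ⟨h, Or.inr rfl⟩
  | succ f ih =>
    rw [PaperDB.greedyAux]
    cases hc : nextDigit q 1 n P l with
    | none => exact ⟨h, Or.inl hc⟩
    | some c =>
      have := ih (h.step hc)
      simp only [List.length_append, List.length_singleton] at this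
      refine ⟨this.1, this.2.imp id fun h => by simp only at *; omega⟩

theorem of_greedy [NeZero q] :
    Reach q (k + 1) P (greedy q 1 (k + 1) P (List.replicate (k + 1) 0)) ∧
      nextDigit q 1 (k + 1) P (greedy q 1 (k + 1) P (List.replicate (k + 1) 0)) = none := by
  have h := (Reach.base (q := q) (n := k + 1) (P := P)).run (q ^ (k + 1))
  refine ⟨h.1, h.2.resolve_right fun h2 => ?_⟩
  have := h.1.length_lt
  simp at h2
  omega

theorem eq_greedy [NeZero q] (h : Reach q (k + 1) P l)
    (hn : nextDigit q 1 (k + 1) P l = none) :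
    greedy q 1 (k + 1) P (List.replicate (k + 1) 0) = l := by
  have h1 := h.length_lt
  obtain ⟨f, hf⟩ : ∃ f, q ^ (k + 1) = l.length - (k + 1) + f := ⟨_, (Nat.add_sub_of_le (by omega)).symm⟩
  rw [greedy, hf, h.greedyAux_eq]
  cases f <;> simp [PaperDB.greedyAux, hn]

end Reach

/-! ### Degrees in the trail of windows -/

/-- Digits `a` for which the edge `a v` entering the vertex `v` has occurred in `l`. -/
def inDigits {q : ℕ} [NeZero q] (l v : List (ZMod q)) : Finset (ZMod q) :=
  Finset.univ.filter fun a => (a :: v) <:+: l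

/-- Digits `c` for which the edge `v c` leaving the vertex `v` has occurred in `l`. -/
def outDigits {q : ℕ} [NeZero q] (l v : List (ZMod q)) : Finset (ZMod q) :=
  Finset.univ.filter fun c => (v ++ [c]) <:+: l

@[simp] theorem mem_inDigits {q : ℕ} [NeZero q] {l v : List (ZMod q)} {a : ZMod q} :
    a ∈ inDigits l v ↔ (a :: v) <:+: l := by simp [inDigits]

@[simp] theorem mem_outDigits {q : ℕ} [NeZero q] {l v : List (ZMod q)} {a : ZMod q} :
    a ∈ outDigits l v ↔ (v ++ [a]) <:+: l := by simp [outDigits]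

/-- Euler balance for the trail of windows: in-degree and out-degree agree, up to the
start vertex `0 ^ k` and the current vertex. -/
theorem Reach.balance {q k : ℕ} [NeZero q] {P : List (ZMod q) → Fin q → ZMod q}
    {l : List (ZMod q)} (h : Reach q (k + 1) P l) {v : List (ZMod q)} (hv : v.length = k) :
    (inDigits l v).card + (if v = List.replicate k 0 then 1 else 0) =
      (outDigits l v).card + (if v = lastN k l then 1 else 0) := by
  induction h with
  | base =>
    have h1 : lastN k (List.replicate (k + 1) (0 : ZMod q)) = List.replicate k 0 := by
      simp [lastN]
    have h2 : inDigits (List.replicate (k + 1) 0) v = outDigits (List.replicate (k + 1) 0) v := by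
      ext a
      rw [mem_inDigits, mem_outDigits]
      constructor
      · intro h
        have := h.eq_of_length (by simp [hv])
        rw [List.replicate_succ, List.cons.injEq] at this
        rw [this.1, this.2, List.replicate_succ']
      · intro h
        have := h.eq_of_length (by simp [hv])
        rw [List.replicate_succ'] at this
        have h3 : a = 0 := by simpa using List.append_inj_right' this rfl
        rw [h3, List.append_inj_left' this rfl, List.replicate_succ]
    rw [h1, h2]
  | @step l c hl hc ih =>
    obtain ⟨i, -, hn, -⟩ := nextDigit_eq_some.1 hc
    have hk := hl.le_length
    have hu : (lastN k l).length = k := lastN_length (by omega)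
    obtain ⟨a, u', hau⟩ : ∃ a u', lastN k l ++ [c] = a :: u' :=
      List.exists_cons_of_ne_nil (by simp)
    have hu' : lastN k (l ++ [c]) = u' := by
      have hs : u' <:+ l ++ [c] := by
        refine (List.suffix_cons a u').trans ?_
        rw [← hau, ← lastN_snoc]
        exact lastN_suffix _ _
      have : u'.length = k := by
        have := congrArg List.length hau
        simp [hu] at this
        omega
      rw [← this]
      exact (eq_lastN_of_suffix hs).symm
    rw [hu']
    have hin : (inDigits (l ++ [c]) v).card =
        (inDigits l v).card + if v = u' then 1 else 0 := by
      split_ifs with hvu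
      · have : inDigits (l ++ [c]) v = insert a (inDigits l v) := by
          ext b
          rw [Finset.mem_insert, mem_inDigits, mem_inDigits,
            infix_snoc (k := k) (by simp [hv]), hau, hvu]
          simp [or_comm]
        rw [this, Finset.card_insert_of_notMem]
        rw [mem_inDigits, hvu, ← hau]
        exact hn
      · congr 1
        ext b
        rw [mem_inDigits, mem_inDigits, infix_snoc (k := k) (by simp [hv]), hau]
        simp [hvu]
    have hout : (outDigits (l ++ [c]) v).card =
        (outDigits l v).card + if v = lastN k l then 1 else 0 := by
      split_ifs with hvu
      · have : outDigits (l ++ [c]) v = insert c (outDigits l v) := by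
          ext b
          rw [Finset.mem_insert, mem_outDigits, mem_outDigits,
            infix_snoc (k := k) (by simp [hv]), hvu]
          simp [or_comm]
        rw [this, Finset.card_insert_of_notMem]
        rw [mem_outDigits, hvu]
        exact hn
      · congr 1
        ext b
        rw [mem_outDigits, mem_outDigits, infix_snoc (k := k) (by simp [hv])]
        have : v ++ [b] ≠ lastN k l ++ [c] := fun h => hvu (List.append_inj_left' h rfl)
        simp [this]
    omega

/-- Apart from the initial word, an edge leaving `v` is used only once all edges leaving `v`
that are preferred to it have been used. -/
theorem Reach.preferred {q k : ℕ} {P : List (ZMod q) → Fin q → ZMod q}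
    (hP : ∀ l, k + 1 ≤ l.length → P (lastN 1 l) = P (lastN 1 (lastN k l)))
    {l : List (ZMod q)} (h : Reach q (k + 1) P l) {v : List (ZMod q)} {c : ZMod q}
    (hv : v.length = k) (hc : (v ++ [c]) <:+: l) (h0 : v ++ [c] ≠ List.replicate (k + 1) 0) :
    ∃ i, P (lastN 1 v) i = c ∧ ∀ j < i, (v ++ [P (lastN 1 v) j]) <:+: l := by
  induction h with
  | base => exact absurd (hc.eq_of_length (by simp [hv])) h0
  | @step l c' hl hc' ih =>
    have mono : ∀ w, w <:+: l → w <:+: l ++ [c'] := fun w hw =>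
      hw.trans (List.prefix_append _ _).isInfix
    rcases (infix_snoc (k := k) (by simp [hv])).1 hc with hc | hc
    · obtain ⟨i, hi, hj⟩ := ih hc
      exact ⟨i, hi, fun j hji => mono _ (hj j hji)⟩
    · obtain ⟨i, hi, -, hj⟩ := nextDigit_eq_some.1 hc'
      obtain rfl := List.append_inj_left' hc rfl
      have hcc : c = c' := by simpa using hc
      rw [hP _ hl.le_length] at hi hj
      exact ⟨i, hi.trans hcc.symm, fun j hji => mono _ (hj j hji)⟩

/-! ### Deleting repeated windows -/

theorem cleaned_snoc {q m : ℕ} (l : List (ZMod q)) (c : ZMod q) :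
    cleaned q m (l ++ [c]) =
      if lastN m (l ++ [c]) <:+: l then cleaned q m l else cleaned q m l ++ [c] := by
  have h1 : ((List.range l.length).filter fun i =>
      !decide ((((l ++ [c]).take (i + 1)).drop (i + 1 - m)) <:+: (l ++ [c]).take i)) =
      (List.range l.length).filter fun i =>
      !decide (((l.take (i + 1)).drop (i + 1 - m)) <:+: l.take i) := by
    refine List.filter_congr fun i hi => ?_
    have hi := List.mem_range.1 hi
    rw [List.take_append_of_le_length (by omega), List.take_append_of_le_length (by omega)]
  have h2 : ∀ L : List ℕ, (∀ i ∈ L, i < l.length) →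
      L.map (fun i => (l ++ [c]).getD i 0) = L.map (fun i => l.getD i 0) := by
    intro L hL
    refine List.map_congr_left fun i hi => ?_
    rw [List.getD_append _ _ _ _ (hL i hi)]
  have h3 : (l ++ [c]).take (l.length + 1) = l ++ [c] := List.take_of_length_le (by simp)
  unfold cleaned
  rw [List.length_append, List.length_singleton, List.range_succ, List.filter_append, h1,
    List.map_append, h2 _ (fun i hi => List.mem_range.1 (List.mem_filter.1 hi).1)]
  simp only [List.filter_cons, List.filter_nil, h3, lastN, List.take_left, List.length_append, List.length_singleton]
  split_ifs <;> simp_all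

theorem cleaned_of_length_le {q m : ℕ} (l : List (ZMod q)) (h : l.length ≤ m) :
    cleaned q m l = l := by
  induction l using List.reverseRecOn with
  | nil => simp [cleaned]
  | append_singleton l c ih =>
    simp at h
    rw [cleaned_snoc, ih (by omega), if_neg]
    intro hi
    have := hi.length_le
    simp [lastN] at this
    omega

/-! ### The map `D_β` -/

section Dmap

variable {q : ℕ} {β : ZMod q}

theorem Dmap_length (l : List (ZMod q)) : (Dmap q β l).length = l.length - 1 := by
  simp [Dmap]

theorem Dmap_cons_cons (a b : ZMod q) (l : List (ZMod q)) :
    Dmap q β (a :: b :: l) = β * (b - a) :: Dmap q β (b :: l) := by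
  simp [Dmap]

theorem Dmap_snoc (l : List (ZMod q)) (a c : ZMod q) :
    Dmap q β (l ++ [a] ++ [c]) = Dmap q β (l ++ [a]) ++ [β * (c - a)] := by
  induction l with
  | nil => simp [Dmap]
  | cons b l ih =>
    cases l with
    | nil => simp [Dmap]
    | cons b' l => simpa [Dmap_cons_cons] using ih

theorem Dmap_suffix {w l : List (ZMod q)} (h : w <:+ l) : Dmap q β w <:+ Dmap q β l := by
  obtain ⟨t, rfl⟩ := h
  induction t with
  | nil => simp
  | cons a t ih =>
    refine ih.trans ?_
    rw [List.cons_append]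
    cases t ++ w with
    | nil => simp [Dmap]
    | cons b t => rw [Dmap_cons_cons]; exact List.suffix_cons _ _

theorem Dmap_prefix {w l : List (ZMod q)} (h : w <+: l) : Dmap q β w <+: Dmap q β l := by
  obtain ⟨t, rfl⟩ := h
  induction t using List.reverseRecOn with
  | nil => simp
  | append_singleton t a ih =>
    refine ih.trans ?_
    rw [← List.append_assoc]
    rcases List.eq_nil_or_concat (w ++ t) with h | ⟨L, b, h⟩
    · rw [h]; simp [Dmap]
    · rw [h, List.concat_eq_append, Dmap_snoc]; exact List.prefix_append _ _

theorem Dmap_infix {w l : List (ZMod q)} (h : w <:+: l) : Dmap q β w <:+: Dmap q β l := by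
  obtain ⟨t, h1, h2⟩ := List.infix_iff_prefix_suffix.1 h
  exact (Dmap_prefix h1).isInfix.trans (Dmap_suffix h2).isInfix

theorem Dmap_lastN {k : ℕ} {l : List (ZMod q)} (h : k + 1 ≤ l.length) :
    lastN k (Dmap q β l) = Dmap q β (lastN (k + 1) l) := by
  have := eq_lastN_of_suffix (Dmap_suffix (β := β) (lastN_suffix (k + 1) l))
  rw [Dmap_length, lastN_length h] at this
  exact this.symm

theorem Dmap_replicate (k : ℕ) :
    Dmap q β (List.replicate (k + 1) 0) = List.replicate k 0 := by
  simp [Dmap, List.zipWith_replicate]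

/-- Every word is the `D_β`-image of a word ending in `0`. -/
theorem exists_lift {γ : ZMod q} (hγ : β * γ = 1) (p : List (ZMod q)) :
    ∃ u, u.length = p.length ∧ Dmap q β (u ++ [0]) = p := by
  induction p with
  | nil => exact ⟨[], by simp [Dmap]⟩
  | cons b p ih =>
    obtain ⟨u, hu, hD⟩ := ih
    obtain ⟨a, t, hat⟩ : ∃ a t, u ++ [0] = a :: t := List.exists_cons_of_ne_nil (by simp)
    refine ⟨(a - γ * b) :: u, by simp [hu], ?_⟩
    rw [List.cons_append, hat, Dmap_cons_cons, ← hat, hD]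
    congr 1
    linear_combination b * hγ

end Dmap

/-! ### The two preference functions -/

theorem Hpref_val {q : ℕ} (x : List (ZMod q)) (i : Fin q) :
    (Hpref q x i).val = q - 1 - i := by
  have := i.2
  rw [Hpref, ZMod.val_natCast, Nat.mod_eq_of_lt (by omega)]

theorem Hpref_surj {q : ℕ} [NeZero q] (x : List (ZMod q)) (c : ZMod q) :
    ∃ i, Hpref q x i = c := by
  have := ZMod.val_lt c
  refine ⟨⟨q - 1 - c.val, by omega⟩, ZMod.val_injective q ?_⟩
  rw [Hpref_val]; simp only; omega

/-- The image under `D_β` of the step to the `i`-th `O`-preferred digit is the `i`-th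
prefer-higher digit. -/
theorem OprefL_eq {q d : ℕ} {β : ZMod q} (hβ : β * d = -1) (x y : List (ZMod q)) (i : Fin q) :
    β * (OprefL q d x i - x.headI) = Hpref q y i := by
  have h : ((q - 1 - (i : ℕ) : ℕ) : ZMod q) + (((i : ℕ) + 1 : ℕ) : ZMod q) = 0 := by
    have := i.2
    rw [← Nat.cast_add, show q - 1 - (i : ℕ) + (i + 1) = q by omega, ZMod.natCast_self]
  unfold OprefL Hpref
  linear_combination ((((i : ℕ) + 1 : ℕ) : ZMod q)) * hβ - h

theorem OprefL_surj {q d : ℕ} [NeZero q] {β : ZMod q} (hβ : β * d = -1)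
    (x y : List (ZMod q)) (c : ZMod q) :
    ∃ j, OprefL q d x j = c ∧ Hpref q y j = β * (c - x.headI) := by
  obtain ⟨j, hj⟩ := Hpref_surj y (β * (c - x.headI))
  refine ⟨j, ?_, hj⟩
  have e := (OprefL_eq hβ x y j).trans hj
  linear_combination (-(d : ZMod q)) * e + (OprefL q d x j - c) * hβ

/-- Preferring `O` in the sequence is preferring higher digits in its `D_β`-image. -/
theorem O_preferred {q k d : ℕ} [NeZero q] {β : ZMod q} (hβ : β * d = -1)
    {l v : List (ZMod q)} (h : Reach q (k + 2) (OprefL q d) l) {a c c' : ZMod q}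
    (hv : v.length = k) (hc : (v ++ [a] ++ [c]) <:+: l)
    (h0 : v ++ [a] ++ [c] ≠ List.replicate (k + 2) 0)
    (hlt : (β * (c - a)).val < (β * (c' - a)).val) : (v ++ [a] ++ [c']) <:+: l := by
  have hlast : ∀ u : List (ZMod q), lastN 1 (u ++ [a]) = [a] := fun u => by simp [lastN]
  obtain ⟨i, hi, hj⟩ := h.preferred (k := k + 1) (fun l hl => by
    congr 1
    have := (lastN_suffix 1 (lastN (k + 1) l)).trans (lastN_suffix (k + 1) l)
    have := eq_lastN_of_suffix this
    rw [lastN_length (by rw [lastN_length] <;> omega)] at this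
    exact this.symm) (by simp [hv]) hc h0
  rw [hlast] at hi hj
  obtain ⟨j, hcj, hj'⟩ := OprefL_surj hβ [a] [] c'
  have e1 := OprefL_eq hβ [a] [] i
  simp only [List.headI_cons] at e1 hj'
  rw [← hcj]
  apply hj
  rw [← hi, ← hj', e1, Hpref_val, Hpref_val] at hlt
  exact Fin.lt_def.2 (by omega)

theorem H_preferred {q k : ℕ} [NeZero q]
    {l v : List (ZMod q)} (h : Reach q (k + 1) (Hpref q) l) {c c' : ZMod q}
    (hv : v.length = k) (hc : (v ++ [c]) <:+: l)
    (h0 : v ++ [c] ≠ List.replicate (k + 1) 0)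
    (hlt : c.val < c'.val) : (v ++ [c']) <:+: l := by
  obtain ⟨i, hi, hj⟩ := h.preferred (fun l hl => rfl) hv hc h0
  obtain ⟨j, hj'⟩ := Hpref_surj (lastN 1 v) c'
  rw [← hj']
  apply hj
  rw [← hi, ← hj', Hpref_val, Hpref_val] at hlt
  exact Fin.lt_def.2 (by omega)

/-! ### The halting vertex and the invariant -/

/-- By balance the construction can only stop at `0 ^ (k + 1)`, with all edges at that vertex used.
Repeating the last digit is the least preferred choice, so having all edges used passes from
`w 0 ⋯ 0 0` back to its predecessor `a w 0 ⋯ 0`. Consequently the construction of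
`o_n` cannot stop before every edge leaving a vertex that ends
in `0` has been used. -/
theorem out_full {q k d : ℕ} [NeZero q] {β : ZMod q} (hβ : β * d = -1)
    {l : List (ZMod q)} (h : Reach q (k + 2) (OprefL q d) l)
    (hn : nextDigit q 1 (k + 2) (OprefL q d) l = none)
    (u : List (ZMod q)) (j : ℕ) (hu : u.length + j = k) (c : ZMod q) :
    (u ++ List.replicate (j + 1) 0 ++ [c]) <:+: l := by
  have hlen := h.le_length
  have hq : ∀ s : Finset (ZMod q), s.card ≤ q := fun s => by
    simpa [ZMod.card] using Finset.card_le_univ s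
  have hfull : ∀ v : List (ZMod q), (∀ c, (v ++ [c]) <:+: l) → (outDigits l v).card = q :=
    fun v hv => by simp [outDigits, hv, ZMod.card]
  have hend : ∀ c, (lastN (k + 1) l ++ [c]) <:+: l := by
    intro c
    obtain ⟨j, hcj, -⟩ := OprefL_surj hβ (lastN 1 l) [] c
    rw [← hcj]
    exact nextDigit_eq_none.1 hn j
  have hl0 : lastN (k + 1) l = List.replicate (k + 1) 0 := by
    by_contra hne
    have := h.balance (k := k + 1) (v := lastN (k + 1) l) (lastN_length (by omega))
    rw [if_neg hne, if_pos rfl, hfull _ hend] at this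
    have := hq (inDigits l (lastN (k + 1) l))
    omega
  induction u generalizing j c with
  | nil =>
    obtain rfl : j = k := by simpa using hu
    simpa [hl0] using hend c
  | cons a u ih =>
    by_cases h0 : a :: u ++ List.replicate (j + 1) 0 = List.replicate (k + 1) 0
    · rw [h0, ← hl0]; exact hend c
    simp at hu
    have hf := hfull _ (ih (j + 1) (by omega))
    have hb := h.balance (k := k + 1) (v := u ++ List.replicate (j + 1 + 1) 0) (by simp; omega)
    rw [hl0, hf] at hb
    have hb' : inDigits l (u ++ List.replicate (j + 1 + 1) 0) = Finset.univ :=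
      (Finset.card_eq_iff_eq_univ _).1 (by rw [ZMod.card]; omega)
    have ha : a ∈ inDigits l (u ++ List.replicate (j + 1 + 1) 0) := by rw [hb']; simp
    have ha : (a :: u ++ List.replicate j 0 ++ [0] ++ [0]) <:+: l := by
      simpa [List.replicate_succ'] using ha
    rw [List.replicate_succ', ← List.append_assoc] at h0 ⊢
    by_cases hc : c = 0
    · rw [hc]; exact ha
    · refine O_preferred hβ h (by simp; omega) ha (fun h1 => h0 ?_) (c := 0) ?_
      · rw [List.replicate_succ'] at h1
        exact List.append_inj_left' h1 rfl
      · have : β * (c - 0) ≠ 0 := by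
          intro h2
          apply hc
          linear_combination (-(d : ZMod q)) * h2 + c * hβ
        simpa [Nat.pos_iff_ne_zero] using this

/-- At each stage of the construction of `o_n`, the cleaned image is a stage of the construction
of `h_{n-1}`, and has the same `(n-1)`-windows as the image itself. -/
theorem main_invariant {q k d : ℕ} [NeZero q] {β : ZMod q} (hβ : β * d = -1)
    {x : List (ZMod q)} (h : Reach q (k + 2) (OprefL q d) x) :
    Reach q (k + 1) (Hpref q) (cleaned q (k + 1) (Dmap q β x)) ∧
    ∀ w : List (ZMod q), w.length = k + 1 →
      (w <:+: cleaned q (k + 1) (Dmap q β x) ↔ w <:+: Dmap q β x) := by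
  induction h with
  | base =>
    rw [Dmap_replicate, cleaned_of_length_le _ (by simp)]
    exact ⟨Reach.base, fun _ _ => Iff.rfl⟩
  | @step x c hx hc ih =>
    obtain ⟨ihR, ihW⟩ := ih
    have hlen := hx.le_length
    obtain ⟨v, a, hva⟩ : ∃ v a, lastN (k + 1) x = v ++ [a] := by
      have hl : (lastN (k + 1) x).length = k + 1 := lastN_length (by omega)
      rcases List.eq_nil_or_concat (lastN (k + 1) x) with h | ⟨L, b, h⟩
      · rw [h] at hl; simp at hl
      · exact ⟨L, b, h.trans List.concat_eq_append⟩
    have hvk : v.length = k := by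
      have hl : (lastN (k + 1) x).length = k + 1 := lastN_length (by omega)
      simpa [hva] using hl
    obtain ⟨x', hx'⟩ : ∃ x', x = x' ++ [a] := by
      obtain ⟨t, ht⟩ := lastN_suffix (k + 1) x
      exact ⟨t ++ v, by rw [← ht, hva, List.append_assoc]⟩
    have hD : Dmap q β (x ++ [c]) = Dmap q β x ++ [β * (c - a)] := by rw [hx', Dmap_snoc]
    rw [hD]
    generalize hb : β * (c - a) = b
    generalize hy : Dmap q β x = y at *
    have hylen : k + 1 ≤ y.length := by rw [← hy, Dmap_length]; omega
    rw [cleaned_snoc, lastN_snoc]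
    have hw : lastN k y = Dmap q β (v ++ [a]) := by rw [← hy, Dmap_lastN (by omega), hva]
    have hwlen : (lastN k y).length = k := lastN_length (by omega)
    split_ifs with hrep
    · -- a repeated window changes neither the cleaned list nor the set of windows
      refine ⟨ihR, fun w hwl => (ihW w hwl).trans ?_⟩
      rw [infix_snoc hwl]
      exact ⟨Or.inl, fun h => h.elim id fun h => h ▸ hrep⟩
    generalize hh : cleaned q (k + 1) y = g at *
    -- As the greedy rule chose `c`, every image digit `t` above `b` has already been used at the
    -- current vertex `v a`; the digit `a - d t` is the one with image `t`.
    have hxT : ∀ t : ZMod q, b.val < t.val → (v ++ [a] ++ [a - d * t]) <:+: x := by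
      intro t ht
      obtain ⟨i, hi, -, hj⟩ := nextDigit_eq_some.1 hc
      have hl1 : lastN 1 x = [a] := by simp [hx', lastN]
      rw [hl1] at hi hj
      rw [hva] at hj
      obtain ⟨j, hcj, hj'⟩ := OprefL_surj hβ [a] [] (a - d * t)
      have e1 := OprefL_eq hβ [a] [] i
      simp only [List.headI_cons] at e1 hj'
      have hj' : Hpref q [] j = t := by linear_combination hj' - t * hβ
      rw [← hcj]
      apply hj
      rw [← hb, ← hj', ← hi, e1, Hpref_val, Hpref_val] at ht
      exact Fin.lt_def.2 (by omega)
    have hyT : ∀ t : ZMod q, b.val < t.val → (lastN k y ++ [t]) <:+: g := by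
      intro t ht
      rw [ihW _ (by simp [hwlen]), hw, ← hy]
      have := Dmap_infix (β := β) (hxT t ht)
      rw [Dmap_snoc] at this
      convert this using 3
      linear_combination t * hβ
    have hbg : ¬ (lastN k y ++ [b]) <:+: g := by
      rwa [ihW _ (by simp [hwlen])]
    have hs : lastN k y = lastN k g := by
      -- Otherwise the digits above `b` already account for all edges of `g` leaving the vertex
      -- `lastN k y`, while the walk `x` has entered `v a` more often than that vertex has
      -- entering edges in `g`.
      by_contra hne
      have hbal := ihR.balance hwlen
      rw [if_neg hne] at hbal
      have hbal2 := hx.balance (k := k + 1) (v := v ++ [a]) (by simp [hvk])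
      rw [if_pos hva.symm] at hbal2
      -- distinct edges entering `v a` have distinct images, all entering `lastN k y`
      have hin : (inDigits x (v ++ [a])).card ≤ (inDigits g (lastN k y)).card := by
        obtain ⟨e, t, het⟩ : ∃ e t, v ++ [a] = e :: t := List.exists_cons_of_ne_nil (by simp)
        refine Finset.card_le_card_of_injOn (fun z => β * (e - z)) ?_ ?_
        · intro z hz
          have hz := Dmap_infix (β := β) (mem_inDigits.1 hz)
          rw [het, Dmap_cons_cons, ← het, ← hw, hy] at hz
          exact mem_inDigits.2 ((ihW _ (by simp [hwlen])).2 hz)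
        · intro z _ z' _ hzz
          simp only at hzz
          linear_combination (d : ZMod q) * hzz - (z' - z) * hβ
      set T : Finset (ZMod q) := Finset.univ.filter fun t => b.val < t.val with hT
      have hT0 : (0 : ZMod q) ∉ T := by simp [hT]
      have hout : (outDigits g (lastN k y)).card ≤
          T.card + if lastN k y = List.replicate k 0 then 1 else 0 := by
        have hmem : ∀ t ∈ outDigits g (lastN k y),
            lastN k y ++ [t] ≠ List.replicate (k + 1) 0 → t ∈ T := by
          intro t ht h0
          rw [mem_outDigits] at ht
          simp only [hT, Finset.mem_filter, Finset.mem_univ, true_and]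
          by_contra hlt
          rcases (not_lt.1 hlt).lt_or_eq with hlt | heq
          · exact hbg (H_preferred ihR hwlen ht h0 hlt)
          · exact hbg (ZMod.val_injective q heq ▸ ht)
        split_ifs with h0
        · rw [← Finset.card_insert_of_notMem hT0]
          refine Finset.card_le_card fun t ht => ?_
          by_cases ht0 : t = 0
          · simp [ht0]
          · refine Finset.mem_insert_of_mem (hmem t ht fun h => ht0 ?_)
            rw [h0, List.replicate_succ'] at h
            simpa using h
        · refine Finset.card_le_card fun t ht => hmem t ht fun h => h0 ?_
          rw [List.replicate_succ'] at h
          exact List.append_inj_left' h rfl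
      have hout2 : T.card + (if v ++ [a] = List.replicate (k + 1) 0 then 1 else 0) ≤
          (outDigits x (v ++ [a])).card := by
        have hinj : Function.Injective fun t : ZMod q => a - d * t := by
          intro t t' htt
          simp only at htt
          linear_combination β * htt + (t - t') * hβ
        have hTm : ∀ t ∈ T, a - d * t ∈ outDigits x (v ++ [a]) := fun t ht =>
          mem_outDigits.2 (hxT t (by simpa [hT] using ht))
        split_ifs with h0
        · rw [← Finset.card_insert_of_notMem hT0]
          refine Finset.card_le_card_of_injOn _ (fun t ht => ?_) hinj.injOn
          rcases Finset.mem_insert.1 (Finset.mem_coe.1 ht) with rfl | ht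
          · have ha : a = 0 := by
              rw [List.replicate_succ'] at h0
              simpa using List.append_inj_right' h0 rfl
            have := hx.zero_infix
            rw [List.replicate_succ', ← h0] at this
            simpa [ha] using this
          · exact hTm t ht
        · exact Finset.card_le_card_of_injOn _ hTm hinj.injOn
      omega
    have hgb : nextDigit q 1 (k + 1) (Hpref q) g = some b := by
      obtain ⟨i, hi⟩ := Hpref_surj (lastN 1 g) b
      refine nextDigit_eq_some.2 ⟨i, hi, hs ▸ hbg, fun j hj => hs ▸ hyT _ ?_⟩
      rw [← hi, Hpref_val, Hpref_val]
      have := i.2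
      have := Fin.lt_def.1 hj
      omega
    refine ⟨ihR.step hgb, fun w hwl => ?_⟩
    rw [infix_snoc hwl, infix_snoc hwl, ihW w hwl, hs]

/-- Let `β = d⁻¹(q-1) (mod q)`.  Mapping the generalized
prefer-opposite sequence `o_n` through `D_β` and deleting every digit whose
ending `(n-1)`-window is a repetition yields exactly the prefer-higher
de Bruijn sequence `h_{n-1}` of order `n-1`. -/
theorem Dmap_oSeq_cleaned_eq_hSeq (q n d : ℕ) (hq : 2 ≤ q) (hn : 2 ≤ n)
    (hd : Nat.Coprime d q) :
    cleaned q (n - 1)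
        (Dmap q ((d : ZMod q)⁻¹ * ((q - 1 : ℕ) : ZMod q)) (oSeq q n d)) =
      hSeq q (n - 1) := by
  obtain ⟨k, rfl⟩ : ∃ k, n = k + 2 := ⟨n - 2, by omega⟩
  have : NeZero q := ⟨by omega⟩
  generalize hβ' : (d : ZMod q)⁻¹ * ((q - 1 : ℕ) : ZMod q) = β
  have hβ : β * d = -1 := by
    have h1 := ZMod.coe_mul_inv_eq_one d hd
    rw [← hβ', Nat.cast_sub (by omega), ZMod.natCast_self]
    push_cast
    linear_combination -h1
  obtain ⟨hR, hN⟩ := Reach.of_greedy (q := q) (k := k + 1) (P := OprefL q d)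
  obtain ⟨hR', hW⟩ := main_invariant hβ hR
  symm
  refine hR'.eq_greedy (nextDigit_eq_none.2 fun i => ?_)
  have hl := hR'.le_length
  rw [hW _ (by rw [List.length_append, lastN_length (by omega), List.length_singleton])]
  generalize hp : lastN k _ = p
  have hpl : p.length = k := by rw [← hp, lastN_length (by omega)]
  generalize Hpref q _ i = b
  obtain ⟨u, hu, hD⟩ := exists_lift (β := β) (γ := -d) (by linear_combination -hβ) p
  have := Dmap_infix (β := β) (out_full hβ hR hN u 0 (by omega) (-d * b))
  rw [show List.replicate (0 + 1) (0 : ZMod q) = [0] from rfl, Dmap_snoc, hD] at this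
  convert this using 3
  linear_combination b * hβ

end PaperDB
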